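/- Let A be a Hadamard matrix of order h ≥ 4, let d ≥ 1, and for each B ∈ {−1,1}^{h×d} define C by c_{ij} = sgn((AᵀB)_{ji}) and F = C A⁻¹ B. Then, averaging over all 2^{hd} equally likely choices of B: E[f_{ii}] = 2^{−h}·h·binom(h, h/2) for each 1 ≤ i ≤ d, and E[f_{ij}] = 0 for all i ≠ j. -/

import Mathlib

open Matrix

/-- The `±1` sign function: `sgn x = 1` if `x ≥ 0`, `−1` if `x < 0`. -/
noncomputable def sgn (x : ℝ) : ℝ := if 0 ≤ x then 1 else -1

/-- The `h × d` sign matrix corresponding to a Boolean matrix `b`. -/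
noncomputable def signMat {h d : ℕ} (b : Fin h → Fin d → Bool) :
    Matrix (Fin h) (Fin d) ℝ :=
  Matrix.of fun i j => if b i j then (1 : ℝ) else -1

/-- The matrix `C` with `c_{ij} = sgn((Aᵀ B)_{ji})`. -/
noncomputable def Cmat {h d : ℕ} (A : Matrix (Fin h) (Fin h) ℝ)
    (B : Matrix (Fin h) (Fin d) ℝ) : Matrix (Fin d) (Fin h) ℝ :=
  Matrix.of fun i j => sgn ((Aᵀ * B) j i)

/-- The matrix `F = C A⁻¹ B`. -/
noncomputable def Fmat {h d : ℕ} (A : Matrix (Fin h) (Fin h) ℝ)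
    (B : Matrix (Fin h) (Fin d) ℝ) : Matrix (Fin d) (Fin d) ℝ :=
  Cmat A B * A⁻¹ * B

/-- Expectation of `f(B)`, averaged over the `2^(h·d)` equally likely
`h × d` matrices `B` with entries in `{−1, 1}`. -/
noncomputable def expec (h d : ℕ) (f : Matrix (Fin h) (Fin d) ℝ → ℝ) : ℝ :=
  (∑ b : Fin h → Fin d → Bool, f (signMat b)) / 2 ^ (h * d)

/-!
For fixed signs `a`, the substitution `b ↦ a ⊙ b` on the cube gives
`E[sgn(⟨a, b⟩) b_l] = a_l E[sgn(∑ b) b_l]`.  The last expectation is the probability that the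
coordinate `b_l` decides the sign of `∑ b`, i.e. that the other `h - 1` signs sum to `0` or `-1`,
so it equals `μ = 2^{1-h} binom(h-1, ⌊(h-1)/2⌋)`.  A sign change in column `j` shows that
`E[c_{ik} b_{lj}] = 0` for `i ≠ j`.  Hence `E[c_{ik} b_{lj}] = δ_{ij} μ a_{lk}`, and
`E[f_{ii}] = μ tr(A A⁻¹) = μ h`.
-/

open Finset

/-- The sign `±1` encoded by a Boolean, with the convention of `signMat`. -/
noncomputable def boolSign (t : Bool) : ℝ := if t then 1 else -1

lemma signMat_apply {h d : ℕ} (b : Fin h → Fin d → Bool) (l : Fin h) (j : Fin d) :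
    signMat b l j = boolSign (b l j) := rfl

section SignVectors

variable {ι : Type*} [Fintype ι]

lemma sum_boolSign (x : ι → Bool) :
    ∑ l, boolSign (x l) = 2 * (#{l | x l} : ℝ) - Fintype.card ι := by
  have boolSign_eq (t : Bool) : boolSign t = 2 * (if t then 1 else 0) - 1 := by
    cases t <;> norm_num [boolSign]
  simp_rw [boolSign_eq, sum_sub_distrib, ← mul_sum, sum_boole]
  simp

lemma card_filter_card_true_eq [DecidableEq ι] (r : ℕ) :
    #{x : ι → Bool | #{l | x l} = r} = (Fintype.card ι).choose r := by
  rw [← card_univ, ← card_powersetCard]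
  let support (x : ι → Bool) : Finset ι := {l | x l}
  let indicator (s : Finset ι) (l : ι) : Bool := decide (l ∈ s)
  refine card_bij' (fun x _ ↦ support x) (fun s _ ↦ indicator s) ?_ ?_ ?_ ?_ <;>
    simp [support, indicator, mem_powersetCard]

end SignVectors

lemma sgn_one_add_sub_sgn_neg_one_add (s : ℝ) :
    sgn (1 + s) - sgn (-1 + s) = if -1 ≤ s ∧ s < 1 then 2 else 0 := by
  unfold sgn
  split_ifs <;> grind

lemma sgn_one_add_sub_sgn_neg_one_add_sum_boolSign {n : ℕ} (y : Fin n → Bool) :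
    sgn (1 + ∑ l, boolSign (y l)) - sgn (-1 + ∑ l, boolSign (y l)) =
      if #{l | y l} = n / 2 then 2 else 0 := by
  rw [sgn_one_add_sub_sgn_neg_one_add, sum_boolSign, Fintype.card_fin]
  refine if_congr ?_ rfl rfl
  set t := #{l | y l}
  calc -1 ≤ 2 * (t : ℝ) - n ∧ 2 * (t : ℝ) - n < 1
    _ ↔ (n : ℝ) ≤ 2 * t + 1 ∧ (2 * t : ℝ) < n + 1 := by constructor <;> grind
    _ ↔ n ≤ 2 * t + 1 ∧ 2 * t < n + 1 := by norm_cast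
    _ ↔ t = n / 2 := by omega

lemma sum_sgn_sum_boolSign_mul {n : ℕ} (p : Fin (n + 1)) :
    ∑ x : Fin (n + 1) → Bool, sgn (∑ l, boolSign (x l)) * boolSign (x p) =
      2 * n.choose (n / 2) := by
  rw [← (Fin.insertNthEquiv (fun _ ↦ Bool) p).sum_comp, Fintype.sum_prod_type_right]
  calc ∑ y : Fin n → Bool, ∑ t, _
    _ = ∑ y : Fin n → Bool,
        (sgn (1 + ∑ l, boolSign (y l)) - sgn (-1 + ∑ l, boolSign (y l))) := by
      simp [Fin.sum_univ_succAbove _ p, boolSign, sub_eq_add_neg]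
    _ = ∑ y : Fin n → Bool, if #{l | y l} = n / 2 then 2 else 0 := by
      simp_rw [sgn_one_add_sub_sgn_neg_one_add_sum_boolSign]
    _ = 2 * n.choose (n / 2) := by
      rw [← sum_filter, sum_const, card_filter_card_true_eq, Fintype.card_fin, nsmul_eq_mul,
        mul_comm]

section Expectation

variable {h d : ℕ}

lemma expec_const_mul (c : ℝ) (f : Matrix (Fin h) (Fin d) ℝ → ℝ) :
    expec h d (fun B ↦ c * f B) = c * expec h d f := by
  simp only [expec, ← mul_sum, mul_div_assoc]

lemma expec_neg (f : Matrix (Fin h) (Fin d) ℝ → ℝ) :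
    expec h d (fun B ↦ -f B) = -expec h d f := by
  simpa using expec_const_mul (-1) f

lemma expec_sum {κ : Type*} (s : Finset κ) (f : κ → Matrix (Fin h) (Fin d) ℝ → ℝ) :
    expec h d (fun B ↦ ∑ k ∈ s, f k B) = ∑ k ∈ s, expec h d (f k) := by
  simp only [expec, ← sum_div]
  rw [sum_comm]

lemma expec_hadamard {σ : Matrix (Fin h) (Fin d) ℝ} (hσ : ∀ l j, σ l j = 1 ∨ σ l j = -1)
    (f : Matrix (Fin h) (Fin d) ℝ → ℝ) :
    expec h d (fun B ↦ f (σ ⊙ B)) = expec h d f := by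
  have exists_flip (l j) : ∃ e : Bool ≃ Bool, ∀ t, σ l j * boolSign t = boolSign (e t) := by
    rcases hσ l j with hlj | hlj
    · exact ⟨Equiv.refl _, by simp [hlj]⟩
    · exact ⟨Equiv.boolNot, by simp [hlj, boolSign]⟩
  choose e he using exists_flip
  unfold expec
  congr 1
  refine Fintype.sum_equiv (Equiv.piCongrRight fun l ↦ Equiv.piCongrRight (e l)) _ _ fun b ↦ ?_
  refine congrArg f (Matrix.ext fun l j ↦ ?_)
  simp [signMat_apply, he]

lemma expec_col (i : Fin d) (g : (Fin h → ℝ) → ℝ) :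
    expec h d (fun B ↦ g (fun l ↦ B l i)) =
      (∑ x : Fin h → Bool, g (fun l ↦ boolSign (x l))) / 2 ^ h := by
  let G (x : Fin h → Bool) : ℝ := g (fun l ↦ boolSign (x l))
  have sum_col : ∑ b : Fin h → Fin d → Bool, g (fun l ↦ signMat b l i) =
      2 ^ (h * (d - 1)) * ∑ x, G x := by
    calc ∑ b : Fin h → Fin d → Bool, g (fun l ↦ signMat b l i)
      _ = ∑ c : Fin d → Fin h → Bool, G (c i) :=
        Fintype.sum_equiv (Equiv.piComm _) _ _ fun _ ↦ rfl
      _ = 2 ^ (h * (d - 1)) * ∑ x, G x := by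
        have := Fintype.sum_piFinset_apply G univ i
        simpa [pow_mul] using this
  have two_pow : (2 : ℝ) ^ (h * d) = 2 ^ (h * (d - 1)) * 2 ^ h := by
    rw [← pow_add, ← Nat.mul_succ, Nat.succ_eq_add_one, Nat.sub_add_cancel i.pos]
  rw [expec, sum_col, two_pow, mul_div_mul_left _ _ (by positivity)]

lemma expec_sgn_sum_mul (i : Fin d) (l : Fin h) :
    expec h d (fun B ↦ sgn (∑ m, B m i) * B l i) =
      2 * ((h - 1).choose ((h - 1) / 2) : ℝ) / 2 ^ h := by
  obtain ⟨n, rfl⟩ := Nat.exists_eq_add_one.mpr l.pos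
  refine (expec_col i (fun v ↦ sgn (∑ m, v m) * v l)).trans ?_
  rw [sum_sgn_sum_boolSign_mul, Nat.add_sub_cancel]

lemma expec_Cmat_mul_self {A : Matrix (Fin h) (Fin h) ℝ} (hA : ∀ l k, A l k = 1 ∨ A l k = -1)
    (i : Fin d) (k l : Fin h) :
    expec h d (fun B ↦ Cmat A B i k * B l i) =
      A l k * (2 * ((h - 1).choose ((h - 1) / 2) : ℝ) / 2 ^ h) := by
  let σ : Matrix (Fin h) (Fin d) ℝ := of fun m _ ↦ A m k
  have hσ (m j) : σ m j = 1 ∨ σ m j = -1 := hA m k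
  have mul_self_eq_one : A l k * A l k = 1 := mul_self_eq_one_iff.mpr (hA l k)
  calc expec h d (fun B ↦ Cmat A B i k * B l i)
    _ = expec h d (fun B ↦ A l k * (sgn (∑ m, (σ ⊙ B) m i) * (σ ⊙ B) l i)) := by
      congr 1 with B
      simp only [Cmat, σ, of_apply, Matrix.mul_apply, transpose_apply, hadamard_apply]
      linear_combination -(sgn (∑ m, A m k * B m i) * B l i) * mul_self_eq_one
    _ = A l k * expec h d (fun B ↦ sgn (∑ m, B m i) * B l i) := by
      rw [expec_const_mul, expec_hadamard hσ (fun B ↦ sgn (∑ m, B m i) * B l i)]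
    _ = A l k * (2 * ((h - 1).choose ((h - 1) / 2) : ℝ) / 2 ^ h) := by rw [expec_sgn_sum_mul]

lemma expec_Cmat_mul_of_ne (A : Matrix (Fin h) (Fin h) ℝ) {i j : Fin d} (hij : i ≠ j)
    (k l : Fin h) : expec h d (fun B ↦ Cmat A B i k * B l j) = 0 := by
  let σ : Matrix (Fin h) (Fin d) ℝ := of fun _ t ↦ if t = j then -1 else 1
  have hσ (m t) : σ m t = 1 ∨ σ m t = -1 := by
    by_cases ht : t = j <;> simp [σ, ht]
  have flip (B : Matrix (Fin h) (Fin d) ℝ) :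
      Cmat A (σ ⊙ B) i k * (σ ⊙ B) l j = -(Cmat A B i k * B l j) := by
    simp [Cmat, σ, Matrix.mul_apply, hij]
  have eq_neg := expec_hadamard hσ (fun B ↦ Cmat A B i k * B l j)
  simp only [flip, expec_neg] at eq_neg
  exact self_eq_neg.mp eq_neg.symm

lemma expec_Fmat (A : Matrix (Fin h) (Fin h) ℝ) (i j : Fin d) :
    expec h d (fun B ↦ Fmat A B i j) =
      ∑ l, ∑ k, A⁻¹ k l * expec h d (fun B ↦ Cmat A B i k * B l j) := by
  simp only [← expec_const_mul, ← expec_sum]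
  congr 1 with B
  simp only [Fmat, Matrix.mul_apply, sum_mul]
  exact sum_congr rfl fun l _ ↦ sum_congr rfl fun k _ ↦ by ring

end Expectation

theorem expec_F_entries_general (h d : ℕ) (A : Matrix (Fin h) (Fin h) ℝ)
    (hA : ∀ i j, A i j = 1 ∨ A i j = -1) (hdet : IsUnit A.det) :
    (∀ i : Fin d,
      expec h d (fun B ↦ Fmat A B i i) =
        (2 : ℝ) ^ (-(h : ℤ)) * h * ((2 * (h - 1).choose ((h - 1) / 2) : ℕ) : ℝ)) ∧
    (∀ i j : Fin d, i ≠ j → expec h d (fun B ↦ Fmat A B i j) = 0) := by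
  refine ⟨fun i ↦ ?_, fun i j hij ↦ by simp [expec_Fmat, expec_Cmat_mul_of_ne A hij]⟩
  have sum_mul_inv : ∑ l, ∑ k, A l k * A⁻¹ k l = h := by
    simpa [trace, Matrix.mul_apply] using congrArg trace (A.mul_nonsing_inv hdet)
  let μ : ℝ := 2 * ((h - 1).choose ((h - 1) / 2) : ℝ) / 2 ^ h
  calc expec h d (fun B ↦ Fmat A B i i)
    _ = ∑ l, ∑ k, A⁻¹ k l * (A l k * μ) := by simp only [expec_Fmat, expec_Cmat_mul_self hA, μ]
    _ = (∑ l, ∑ k, A l k * A⁻¹ k l) * μ := by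
      simp only [sum_mul]
      exact sum_congr rfl fun l _ ↦ sum_congr rfl fun k _ ↦ by ring
    _ = h * μ := by rw [sum_mul_inv]
    _ = (2 : ℝ) ^ (-(h : ℤ)) * h * ((2 * (h - 1).choose ((h - 1) / 2) : ℕ) : ℝ) := by
      rw [_root_.zpow_neg, zpow_natCast]
      push_cast
      ring

lemma isUnit_det_of_transpose_mul_self_eq_smul_one {ι K : Type*} [Fintype ι] [DecidableEq ι]
    [Field K] {A : Matrix ι ι K} {c : K} (hc : c ≠ 0) (hA : Aᵀ * A = c • 1) : IsUnit A.det :=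
  isUnit_det_of_left_inverse (B := c⁻¹ • Aᵀ) (by rw [Matrix.smul_mul, hA, inv_smul_smul₀ hc])

lemma two_mul_choose_pred_eq_choose_half {n : ℕ} (hn : n ≠ 0) (hn' : Even n) :
    2 * (n - 1).choose ((n - 1) / 2) = n.choose (n / 2) := by
  obtain ⟨m, rfl⟩ : ∃ m, n = 2 * m + 2 := ⟨n / 2 - 1, by grind⟩
  rw [show 2 * m + 2 - 1 = 2 * m + 1 by omega, show (2 * m + 1) / 2 = m by omega,
    show (2 * m + 2) / 2 = m + 1 by omega, Nat.choose_succ_succ', Nat.choose_symm_half, two_mul]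

/-- Let `A` be a Hadamard matrix of order `h ≥ 4` (so `4 ∣ h`), `d ≥ 1`, and
for each `B ∈ {−1,1}^{h×d}` set `C = sgn(AᵀB)ᵀ` and `F = C A⁻¹ B`.  Then,
averaging over all `2^{hd}` equally likely choices of `B`:
`E[f_{ii}] = 2^{−h} h binom(h, h/2)` and `E[f_{ij}] = 0` for `i ≠ j`. -/
theorem expec_F_entries (h d : ℕ) (h4 : 4 ∣ h) (hh : 4 ≤ h) (hd : 1 ≤ d)
    (A : Matrix (Fin h) (Fin h) ℝ)
    (hA1 : ∀ i j, A i j = 1 ∨ A i j = -1)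
    (hA2 : Aᵀ * A = (h : ℝ) • 1) :
    (∀ i : Fin d,
      expec h d (fun B => Fmat A B i i) =
        (2 : ℝ) ^ (-(h : ℤ)) * h * (h.choose (h / 2) : ℝ)) ∧
    (∀ i j : Fin d, i ≠ j → expec h d (fun B => Fmat A B i j) = 0) := by
 
  have hdet := isUnit_det_of_transpose_mul_self_eq_smul_one (by positivity) hA2
  simpa only [two_mul_choose_pred_eq_choose_half (by omega : h ≠ 0) (by grind)] using
    expec_F_entries_general h d A hA1 hdet
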